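/- Assume Slater's condition: there exist P̃ ∈ P(R) and η > 0 such that E_{P̃}[C(·, b)] − v ≤ −η for every b ∈ R. Assume also λ_1 = 0 and v ≤ 2Θ. Then for every integer T ≥ 1 and every positive integer ℵ, the cumulative constraint violation of Algorithm 1, measured along the requests it uses, satisfies Σ_{t=1}^{T} ( E_{P^t}[C_V(·, b^{t-1}) + C_T(·, b^{t-1})] − v ) ≤ θ ℵ / μ, where ϱ = μ(2Θ − v), χ = (1/(η ℵ)) ( (1/2) μ (4Θ² + v²) + (α/2)|R|Θ² + 1/(α(ℵ+1)) + Θ ) + ϱ(ℵ+2)/(2ℵ), and θ = max{ϱ, χ}. -/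

import Mathlib

/-!
The dual update gives `lam (t + 1) ≥ lam t + μ g_t`, so the cumulative violation is at most the last
multiplier divided by `μ`, and it suffices to bound the multipliers by `θ ℵ`.

The proximal objective is strongly convex, so its minimizer beats the Slater point by a quadratic
margin. Hence `lam ^ 2 / 2`, corrected by the squared distance to the Slater point, drifts by at
most a constant minus `μ η lam`. If `lam` exceeded `θ ℵ` for the first time at `τ`, then, its
increments being at most `ϱ ≤ θ`, there would be `ℵ + 1` indices preceding `τ`, and `lam` would be
at least `θ ℵ - j ϱ` at distance `j` from `τ`. Summing the drift over this window bounds `lam τ` by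
the multiplier at the start of the window, which contradicts the choice of `τ`.
-/

open Finset

open scoped Topology

section ProximalStep

variable {E : Type*} [NormedAddCommGroup E] {K : Set E} {p q : E}

theorem add_modulus_le_of_isMinOn [NormedSpace ℝ E] {F : E → ℝ} {φ : ℝ → ℝ}
    (hF : UniformConvexOn K φ F) (hp : p ∈ K) (hmin : IsMinOn F K p) (hq : q ∈ K) :
    F p + φ ‖q - p‖ ≤ F q := by
  have hsegment : ∀ s ∈ Set.Ioc (0 : ℝ) 1, F p + (1 - s) * φ ‖q - p‖ ≤ F q := fun s hs => by
    have hs' : 0 ≤ 1 - s := sub_nonneg.2 hs.2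
    have hconv := hF.2 hq hp hs.1.le hs' (add_sub_cancel s 1)
    have hle := isMinOn_iff.1 hmin _ (hF.1 hq hp hs.1.le hs' (add_sub_cancel s 1))
    refine le_of_mul_le_mul_left ?_ hs.1
    simp only [smul_eq_mul] at hconv
    linarith
  have hlim : Filter.Tendsto (fun s : ℝ => F p + (1 - s) * φ ‖q - p‖) (𝓝[>] 0)
      (𝓝 (F p + (1 - 0) * φ ‖q - p‖)) :=
    (Continuous.tendsto (by fun_prop) 0).mono_left nhdsWithin_le_nhds
  rw [sub_zero, one_mul] at hlim
  exact le_of_tendsto hlim (Filter.mem_of_superset (Ioc_mem_nhdsGT one_pos) hsegment)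

variable [InnerProductSpace ℝ E] {h : E → ℝ}

theorem strongConvexOn_add_mul_sq_norm_sub (hh : ConvexOn ℝ K h) (c : ℝ) (p₀ : E) :
    StrongConvexOn K (2 * c) fun x => h x + c * ‖x - p₀‖ ^ 2 := by
  have haffine : ConvexOn ℝ K fun x => innerₛₗ ℝ (-(2 * c) • p₀) x + c * ‖p₀‖ ^ 2 :=
    ((innerₛₗ ℝ (-(2 * c) • p₀)).convexOn hh.1).add_const _
  refine strongConvexOn_iff_convex.2 ((hh.add haffine).congr fun x _ => ?_)
  simp only [Pi.add_apply, innerₛₗ_apply_apply, real_inner_smul_left, norm_sub_sq_real,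
    real_inner_comm x p₀]
  ring

theorem prox_three_point {c : ℝ} {p₀ : E} (hh : ConvexOn ℝ K h) (hp : p ∈ K)
    (hmin : IsMinOn (fun x => h x + c * ‖x - p₀‖ ^ 2) K p) (hq : q ∈ K) :
    h p + c * ‖p - p₀‖ ^ 2 + c * ‖q - p‖ ^ 2 ≤ h q + c * ‖q - p₀‖ ^ 2 := by
  simpa using add_modulus_le_of_isMinOn (strongConvexOn_add_mul_sq_norm_sub hh c p₀) hp hmin hq

end ProximalStep

section Drift

variable {u : ℕ → ℝ} {ρ : ℝ}

theorem le_add_mul_of_succ_le_add (hinc : ∀ k, u (k + 1) ≤ u k + ρ) (n : ℕ) :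
    u n ≤ u 0 + n * ρ := by
  induction n with
  | zero => simp
  | succ n ih =>
    push_cast
    linarith [hinc n]

theorem mul_sub_le_sum_range_of_succ_le_add (hinc : ∀ k, u (k + 1) ≤ u k + ρ) (m : ℕ) :
    m * (u m - ρ * (m + 1) / 2) ≤ ∑ i ∈ range m, u i := by
  induction m with
  | zero => simp
  | succ m ih =>
    have hstep := mul_le_mul_of_nonneg_left (hinc m) (by positivity : (0 : ℝ) ≤ m + 1)
    rw [sum_range_succ]
    push_cast
    linarith

theorem window_end_le_of_sq_drift {d : ℕ → ℝ} {a e D B : ℝ} {m : ℕ} (hm : 0 < m) (he : 0 ≤ e)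
    (hu0 : 0 ≤ u 0) (hd0 : d 0 ≤ D) (hdm : 0 ≤ d m) (hinc : ∀ k, u (k + 1) ≤ u k + ρ)
    (hdrift : ∀ k, u (k + 1) ^ 2 / 2 + d (k + 1) ≤ u k ^ 2 / 2 + d k + (a - e * u k))
    (hB : a + D / m ≤ e * (B - ρ * (m + 1) / 2)) (hstart : u 0 ≤ B) : u m ≤ B := by
  by_contra! hlt
  have hsq : u 0 ^ 2 < u m ^ 2 := pow_lt_pow_left₀ (hstart.trans_lt hlt) hu0 two_ne_zero
  have htotal : u m ^ 2 / 2 + d m - (u 0 ^ 2 / 2 + d 0) ≤ m * a - e * ∑ i ∈ range m, u i := calc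
    _ = ∑ i ∈ range m, (u (i + 1) ^ 2 / 2 + d (i + 1) - (u i ^ 2 / 2 + d i)) :=
      (sum_range_sub (fun i => u i ^ 2 / 2 + d i) m).symm
    _ ≤ ∑ i ∈ range m, (a - e * u i) := sum_le_sum fun i _ => sub_le_iff_le_add'.2 (hdrift i)
    _ = m * a - e * ∑ i ∈ range m, u i := by
      rw [sum_sub_distrib, ← mul_sum, sum_const, card_range, nsmul_eq_mul]
  have hdecay : m * a + D ≤ e * ∑ i ∈ range m, u i := calc
    m * a + D = m * (a + D / m) := by field_simp
    _ ≤ m * (e * (B - ρ * (m + 1) / 2)) := by gcongr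
    _ = e * (m * (B - ρ * (m + 1) / 2)) := mul_left_comm _ _ _
    _ ≤ e * (m * (u m - ρ * (m + 1) / 2)) := by gcongr
    _ ≤ e * ∑ i ∈ range m, u i := by gcongr; exact mul_sub_le_sum_range_of_succ_le_add hinc m
  linarith

theorem le_of_sq_drift {d : ℕ → ℝ} {a e D B : ℝ} {N : ℕ} (he : 0 ≤ e) (hρ : 0 ≤ ρ)
    (hd0 : ∀ k, 0 ≤ d k) (hdD : ∀ k, d k ≤ D) (hu0 : u 0 = 0) (hu : ∀ k, 0 ≤ u k)
    (hinc : ∀ k, u (k + 1) ≤ u k + ρ)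
    (hdrift : ∀ k, u (k + 1) ^ 2 / 2 + d (k + 1) ≤ u k ^ 2 / 2 + d k + (a - e * u k))
    (hNB : N * ρ ≤ B) (hB : a + D / (N + 1) ≤ e * (B - ρ * (N + 2) / 2)) (n : ℕ) : u n ≤ B := by
  induction n using Nat.strong_induction_on with
  | _ n ih =>
    obtain hn | hn := le_or_gt n N
    · calc u n ≤ n * ρ := by simpa [hu0] using le_add_mul_of_succ_le_add hinc n
        _ ≤ N * ρ := by gcongr
        _ ≤ B := hNB
    · obtain ⟨k, rfl⟩ := Nat.exists_eq_add_of_le' (Nat.succ_le_of_lt hn)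
      refine window_end_le_of_sq_drift (u := fun i => u (k + i)) (d := fun i => d (k + i))
        N.succ_pos he (hu k) (hdD k) (hd0 _) (fun i => hinc (k + i)) (fun i => hdrift (k + i)) ?_
        (ih k (by lia))
      push_cast
      linarith

end Drift

/-- A run of the online proximal primal–dual method on the set `K`: at step `t` the decision
`x (t + 1)` minimizes the Lagrangian of the cost `f t` and the constraint `g t ≤ 0` plus a proximal
term around `x t`, after which the multiplier moves along the constraint value. The multipliers are
indexed from `0`, so that `lam t`, which is `λ_{t+1}` in the paper, is the one used to compute
`x (t + 1)`. -/
structure IsProxDualRun {E : Type*} [NormedAddCommGroup E] (K : Set E) (f g : ℕ → E → ℝ)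
    (α μ : ℝ) (x : ℕ → E) (lam : ℕ → ℝ) : Prop where
  mem : ∀ t, x t ∈ K
  multiplier_zero : lam 0 = 0
  isMinOn : ∀ t, IsMinOn
    (fun y => f t y + lam t * g t y + 1 / (2 * α) * ‖y - x t‖ ^ 2) K (x (t + 1))
  multiplier_succ : ∀ t, lam (t + 1) = max 0 (lam t + μ * g t (x (t + 1)))

namespace IsProxDualRun

variable {E : Type*} [NormedAddCommGroup E] {K : Set E} {f g : ℕ → E → ℝ} {α μ : ℝ}
  {x : ℕ → E} {lam : ℕ → ℝ}

theorem multiplier_nonneg (hrun : IsProxDualRun K f g α μ x lam) (t : ℕ) : 0 ≤ lam t := by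
  cases t with
  | zero => exact hrun.multiplier_zero.ge
  | succ t => exact hrun.multiplier_succ t ▸ le_max_left _ _

theorem multiplier_succ_le (hrun : IsProxDualRun K f g α μ x lam) {G : ℝ} (hμ : 0 ≤ μ)
    (hG : 0 ≤ G) (hgG : ∀ t, ∀ y ∈ K, g t y ≤ G) (t : ℕ) : lam (t + 1) ≤ lam t + μ * G := by
  have hlam := hrun.multiplier_nonneg t
  rw [hrun.multiplier_succ]
  refine max_le (by positivity) ?_
  gcongr
  exact hgG t _ (hrun.mem _)

theorem mul_sum_constraint_le_multiplier (hrun : IsProxDualRun K f g α μ x lam) (T : ℕ) :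
    μ * ∑ t ∈ range T, g t (x (t + 1)) ≤ lam T := by
  induction T with
  | zero => simp [hrun.multiplier_zero]
  | succ T ih =>
    rw [sum_range_succ, mul_add, hrun.multiplier_succ]
    exact (add_le_add_left ih _).trans (le_max_right _ _)

theorem multiplier_succ_sq_le (hrun : IsProxDualRun K f g α μ x lam) (t : ℕ) :
    lam (t + 1) ^ 2 ≤ (lam t + μ * g t (x (t + 1))) ^ 2 := by
  rw [hrun.multiplier_succ]
  exact sq_le_sq.2 (by simpa [max_comm] using abs_max_sub_max_le_abs (lam t + _) 0 0)

variable [InnerProductSpace ℝ E] {z : E} {η F S : ℝ}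

theorem multiplier_mul_constraint_le (hrun : IsProxDualRun K f g α μ x lam) (hα : 0 ≤ α)
    (hf : ∀ t, ConvexOn ℝ K (f t)) (hg : ∀ t, ConvexOn ℝ K (g t))
    (hz : z ∈ K) (hSlater : ∀ t, g t z ≤ -η) (hF : ∀ t, ∀ y ∈ K, f t z - f t y ≤ F) (t : ℕ) :
    lam t * g t (x (t + 1)) ≤
      F - η * lam t + 1 / (2 * α) * (‖z - x t‖ ^ 2 - ‖z - x (t + 1)‖ ^ 2) := by
  have hlam := hrun.multiplier_nonneg t
  have hthree := prox_three_point ((hf t).add ((hg t).smul hlam)) (hrun.mem (t + 1))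
    (hrun.isMinOn t) hz
  have hslater := mul_le_mul_of_nonneg_left (hSlater t) hlam
  have hprox : 0 ≤ 1 / (2 * α) * ‖x (t + 1) - x t‖ ^ 2 := by positivity
  simp only [Pi.add_apply, smul_eq_mul] at hthree
  linarith [hF t _ (hrun.mem (t + 1))]

theorem multiplier_sq_drift (hrun : IsProxDualRun K f g α μ x lam) (hα : 0 ≤ α) (hμ : 0 ≤ μ)
    (hf : ∀ t, ConvexOn ℝ K (f t)) (hg : ∀ t, ConvexOn ℝ K (g t))
    (hz : z ∈ K) (hSlater : ∀ t, g t z ≤ -η) (hF : ∀ t, ∀ y ∈ K, f t z - f t y ≤ F)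
    (hS : ∀ t, ∀ y ∈ K, g t y ^ 2 ≤ S) (t : ℕ) :
    lam (t + 1) ^ 2 / 2 + μ / (2 * α) * ‖z - x (t + 1)‖ ^ 2 ≤
      lam t ^ 2 / 2 + μ / (2 * α) * ‖z - x t‖ ^ 2 + (μ * (1 / 2 * μ * S + F) - μ * η * lam t) := by
  have hcross := mul_le_mul_of_nonneg_left
    (hrun.multiplier_mul_constraint_le hα hf hg hz hSlater hF t) hμ
  have hquad := mul_le_mul_of_nonneg_left (hS t _ (hrun.mem (t + 1))) (sq_nonneg μ)
  have hsq := hrun.multiplier_succ_sq_le t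
  rw [div_eq_mul_one_div μ]
  linarith

end IsProxDualRun

theorem stmt4_general {E : Type*} [NormedAddCommGroup E] [InnerProductSpace ℝ E] {K : Set E}
    {f g : ℕ → E → ℝ} {α μ : ℝ} {x : ℕ → E} {lam : ℕ → ℝ} (hrun : IsProxDualRun K f g α μ x lam)
    (hα : 0 < α) (hμ : 0 < μ)
    (hf : ∀ t, ConvexOn ℝ K (f t)) (hg : ∀ t, ConvexOn ℝ K (g t))
    {D F G S : ℝ} (hD : ∀ y ∈ K, ∀ w ∈ K, ‖y - w‖ ^ 2 / 2 ≤ D)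
    (hF : ∀ t, ∀ y ∈ K, ∀ w ∈ K, f t y - f t w ≤ F)
    (hG : 0 ≤ G) (hgG : ∀ t, ∀ y ∈ K, g t y ≤ G) (hS : ∀ t, ∀ y ∈ K, g t y ^ 2 ≤ S)
    {z : E} {η : ℝ} (hη : 0 < η) (hz : z ∈ K) (hSlater : ∀ t, g t z ≤ -η)
    (T : ℕ) {N : ℕ} (hN : 0 < N) :
    ∑ t ∈ range T, g t (x (t + 1)) ≤
      max (μ * G) (1 / (η * N) * (1 / 2 * μ * S + D / (α * (N + 1)) + F) +
        μ * G * (N + 2) / (2 * N)) * N / μ := by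
  rw [le_div_iff₀' hμ]
  refine (hrun.mul_sum_constraint_le_multiplier T).trans ?_
  refine le_of_sq_drift (d := fun t => μ / (2 * α) * ‖z - x t‖ ^ 2) (D := μ * D / α) (N := N)
    (mul_pos hμ hη).le (mul_nonneg hμ.le hG) (fun t => by positivity) (fun t => ?_)
    hrun.multiplier_zero hrun.multiplier_nonneg (hrun.multiplier_succ_le hμ.le hG hgG)
    (hrun.multiplier_sq_drift hα.le hμ.le hf hg hz hSlater (hF · z hz · ·) hS) ?_ ?_ T
  · calc μ / (2 * α) * ‖z - x t‖ ^ 2 = μ * (‖z - x t‖ ^ 2 / 2) / α := by field_simp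
      _ ≤ μ * D / α := by gcongr; exact hD z hz _ (hrun.mem t)
  · rw [mul_comm]
    gcongr
    exact le_max_left _ _
  · set A := 1 / 2 * μ * S + D / (α * (N + 1)) + F with hA
    calc μ * (1 / 2 * μ * S + F) + μ * D / α / (N + 1)
        = μ * η * ((1 / (η * N) * A + μ * G * (N + 2) / (2 * N)) * N - μ * G * (N + 2) / 2) := by
          rw [hA]; field_simp; ring
      _ ≤ _ := by gcongr; exact le_max_right _ _

section Simplex

variable (R : Type*) [Fintype R]

/-- The probability simplex `P(R)`, transported from `R → ℝ` to `EuclideanSpace ℝ R` so that it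
carries the Euclidean norm. -/
def probSimplex : Set (EuclideanSpace ℝ R) := {p | p.ofLp ∈ stdSimplex ℝ R}

variable {R} {p q : EuclideanSpace ℝ R} {f : R → ℝ}

theorem convex_probSimplex : Convex ℝ (probSimplex R) :=
  (convex_stdSimplex ℝ R).linear_preimage (WithLp.linearEquiv 2 ℝ (R → ℝ)).toLinearMap

theorem half_sq_norm_sub_le_of_mem_probSimplex (hp : p ∈ probSimplex R) (hq : q ∈ probSimplex R) :
    ‖p - q‖ ^ 2 / 2 ≤ 1 := by
  have hcoord : ∀ a, (p - q) a ^ 2 ≤ p a + q a := fun a => by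
    obtain ⟨hp0, hp1⟩ := mem_Icc_of_mem_stdSimplex hp a
    obtain ⟨hq0, hq1⟩ := mem_Icc_of_mem_stdSimplex hq a
    rw [PiLp.sub_apply]
    nlinarith [mul_nonneg hp0 hq0]
  have hsum : ∑ a, (p - q) a ^ 2 ≤ 2 := calc
    ∑ a, (p - q) a ^ 2 ≤ ∑ a, (p a + q a) := sum_le_sum fun a _ => hcoord a
    _ = 2 := by rw [sum_add_distrib, hp.2, hq.2, one_add_one_eq_two]
  rw [EuclideanSpace.real_norm_sq_eq]
  linarith

theorem sum_mul_mem_of_mem_probSimplex {s : Set ℝ} (hs : Convex ℝ s) (hp : p ∈ probSimplex R)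
    (hf : ∀ a, f a ∈ s) : ∑ a, p a * f a ∈ s :=
  hs.sum_mem (fun a _ => hp.1 a) hp.2 fun a _ => hf a

theorem convexOn_sum_mul {K : Set (EuclideanSpace ℝ R)} (hK : Convex ℝ K) (f : R → ℝ) :
    ConvexOn ℝ K fun p => ∑ a, p a * f a :=
  (innerₛₗ ℝ (WithLp.toLp 2 f)).convexOn hK

end Simplex

theorem stmt4
    {R : Type*} [Fintype R] [Nonempty R]
    (CR : R → ℝ) (CV CT : R → R → ℝ) (Θ v α μ : ℝ)
    (hΘ : 0 < Θ) (hv : 0 < v) (hα : 0 < α) (hμ : 0 < μ)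
    (hCR : ∀ a : R, 0 ≤ CR a ∧ CR a ≤ Θ)
    (hCV : ∀ a c : R, 0 ≤ CV a c ∧ CV a c ≤ Θ)
    (hCT : ∀ a c : R, 0 ≤ CT a c ∧ CT a c ≤ Θ)
    (b : ℕ → R) (P : ℕ → EuclideanSpace ℝ R) (lam : ℕ → ℝ)
    (hP0 : (∀ a : R, 0 ≤ P 0 a) ∧ ∑ a : R, P 0 a = 1)
    (hlam1 : lam 1 = 0)
    (hPmem : ∀ t : ℕ, 1 ≤ t → (∀ a : R, 0 ≤ P t a) ∧ ∑ a : R, P t a = 1)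
    (hPmin : ∀ t : ℕ, 1 ≤ t → ∀ Q : EuclideanSpace ℝ R,
      ((∀ a : R, 0 ≤ Q a) ∧ ∑ a : R, Q a = 1) →
      (∑ a : R, P t a * CR a) +
        lam t * ((∑ a : R, P t a * (CV a (b (t-1)) + CT a (b (t-1)))) - v) +
        (1/(2*α)) * ‖P t - P (t-1)‖^2 ≤
      (∑ a : R, Q a * CR a) +
        lam t * ((∑ a : R, Q a * (CV a (b (t-1)) + CT a (b (t-1)))) - v) +
        (1/(2*α)) * ‖Q - P (t-1)‖^2)
    (hlam : ∀ t : ℕ, 1 ≤ t →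
      lam (t+1) = max 0 (lam t + μ * ((∑ a : R, P t a * (CV a (b (t-1)) + CT a (b (t-1)))) - v)))
    (Ptilde : EuclideanSpace ℝ R) (η : ℝ) (hη : 0 < η)
    (hPtilde : (∀ a : R, 0 ≤ Ptilde a) ∧ ∑ a : R, Ptilde a = 1)
    (hSlater : ∀ c : R, (∑ a : R, Ptilde a * (CV a c + CT a c)) - v ≤ -η)
    (hvΘ : v ≤ 2*Θ)
    (T : ℕ) (hT : 1 ≤ T) (ℵ : ℕ) (hℵ : 1 ≤ ℵ) :
    ∑ t ∈ Finset.Icc 1 T,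
        ((∑ a : R, P t a * (CV a (b (t-1)) + CT a (b (t-1)))) - v) ≤
      (max (μ*(2*Θ - v)) ((1/(η*(ℵ:ℝ))) * ((1/2)*μ*(4*Θ^2+v^2) + (α/2)*(Fintype.card R : ℝ)*Θ^2 + 1/(α*((ℵ:ℝ)+1)) + Θ) + (μ*(2*Θ - v))*((ℵ:ℝ)+2)/(2*(ℵ:ℝ)))) * (ℵ:ℝ) / μ := by
  have hrun : IsProxDualRun (probSimplex R) (fun _ Q => ∑ a, Q a * CR a)
      (fun t Q => ∑ a, Q a * (CV a (b t) + CT a (b t)) - v) α μ P (fun t => lam (t + 1)) :=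
    ⟨Nat.rec hP0 fun t _ => hPmem (t + 1) t.succ_pos, hlam1,
      fun t => isMinOn_iff.2 (hPmin (t + 1) t.succ_pos), fun t => hlam (t + 1) t.succ_pos⟩
  have hcost : ∀ Q ∈ probSimplex R, ∑ a, Q a * CR a ∈ Set.Icc 0 Θ := fun Q hQ =>
    sum_mul_mem_of_mem_probSimplex (convex_Icc _ _) hQ hCR
  have hviol : ∀ t, ∀ Q ∈ probSimplex R,
      ∑ a, Q a * (CV a (b t) + CT a (b t)) ∈ Set.Icc 0 (2 * Θ) := fun t Q hQ =>
    sum_mul_mem_of_mem_probSimplex (convex_Icc _ _) hQ fun a =>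
      two_mul Θ ▸ ⟨add_nonneg (hCV a _).1 (hCT a _).1, add_le_add (hCV a _).2 (hCT a _).2⟩
  rw [← Ico_add_one_right_eq_Icc, sum_Ico_eq_sum_range]
  simp only [add_comm 1, add_tsub_cancel_right]
  refine (stmt4_general hrun hα hμ (fun _ => convexOn_sum_mul convex_probSimplex _)
    (fun _ => (convexOn_sum_mul convex_probSimplex _).add_const (-v))
    (fun p hp q hq => half_sq_norm_sub_le_of_mem_probSimplex hp hq)
    (F := Θ) (fun _ p hp q hq => by linarith [(hcost p hp).2, (hcost q hq).1])
    (sub_nonneg.2 hvΘ) (fun t p hp => sub_le_sub_right (hviol t p hp).2 v)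
    (S := 4 * Θ ^ 2 + v ^ 2) (fun t p hp => ?_) hη hPtilde (fun t => hSlater (b t)) T hℵ).trans ?_
  · nlinarith [(hviol t p hp).1, (hviol t p hp).2]
  · gcongr
    exact le_add_of_nonneg_right (by positivity)
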